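/- (Theorem 1, constraint-violation bound.) Let Θ be a nonempty type, F, J : Θ → ℝ, ε ≥ 0, J̄ ≥ 0 with max{ε, J̄} > 0, μ₁ > 0, K ≥ 1, and η = μ₁/(√K · max{ε, J̄}). Let μ₁, …, μ_{K+1} ∈ ℝ and θ₁, …, θ_K ∈ Θ satisfy: for each k, θₖ maximizes the Lagrangian with multiplier μₖ, 0 ≤ J(θₖ) ≤ J̄, and μₖ₊₁ = max(μₖ − η(ε − J(θₖ)), 0). Suppose μ* ≥ 0 is such that some θ' ∈ Θ maximizes the Lagrangian with multiplier μ*, and for every k, F(θₖ) + μₖ(ε − J(θₖ)) ≥ F(θ') + μ*(ε − J(θ')). Then for every μ_C > μ*, (1/K)·Σ_{k=1}^{K} (J(θₖ) − ε) ≤ max{ε, J̄}·(μ₁ + (μ_C − μ₁)²/(2μ₁)) / (√K·(μ_C − μ*)). -/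

import Mathlib

/-!
Run the projected dual update against a comparator `c ≥ 0`. Projecting onto `[0, ∞)` brings a point
no farther from `c`, so telescoping the squared distances `(μ k - c) ^ 2` bounds the regret
`∑ g k * (μ k - c)` of the slacks `g k = ε - J (θ k)`. Comparing Lagrangians at `θ k` gives
`0 ≤ g k * (μ k - μ*)`, hence `(c - μ*) * (-g k) ≤ g k * (μ k - c)`: the total violation, scaled by
`c - μ*`, is at most the regret. The step size is chosen so that `K * (η * max ε Jbar) ^ 2` equals
`μ 1 ^ 2`.
-/

section ProjectedDescent

variable {R : Type*} [CommRing R] [LinearOrder R] [IsStrictOrderedRing R]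

theorem sq_max_zero_sub_le_sq_sub (x : R) {c : R} (hc : 0 ≤ c) :
    (max x 0 - c) ^ 2 ≤ (x - c) ^ 2 :=
  sq_le_sq.2 <| by simpa only [max_eq_left hc] using abs_max_sub_max_le_abs x c 0

variable {μ g : ℕ → R} {η c ν : R} {m n : ℕ}

theorem regret_le_of_projected_descent (hmn : m ≤ n) (hc : 0 ≤ c)
    (hupd : ∀ k ∈ Finset.Ico m n, μ (k + 1) = max (μ k - η * g k) 0) :
    2 * η * ∑ k ∈ Finset.Ico m n, g k * (μ k - c) ≤
      (μ m - c) ^ 2 + η ^ 2 * ∑ k ∈ Finset.Ico m n, g k ^ 2 := by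
  have one_step : ∀ k ∈ Finset.Ico m n,
      2 * η * (g k * (μ k - c)) ≤ η ^ 2 * g k ^ 2 - ((μ (k + 1) - c) ^ 2 - (μ k - c) ^ 2) := by
    intro k hk
    have contraction : (μ (k + 1) - c) ^ 2 ≤ (μ k - η * g k - c) ^ 2 :=
      hupd k hk ▸ sq_max_zero_sub_le_sq_sub _ hc
    linarith
  have telescoped := Finset.sum_le_sum one_step
  rw [Finset.sum_sub_distrib, Finset.sum_Ico_sub (fun k ↦ (μ k - c) ^ 2) hmn,
    ← Finset.mul_sum, ← Finset.mul_sum] at telescoped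
  linarith [sq_nonneg (μ n - c)]

theorem sum_neg_le_of_projected_descent (hmn : m ≤ n) (hη : 0 ≤ η) (hc : 0 ≤ c)
    (hupd : ∀ k ∈ Finset.Ico m n, μ (k + 1) = max (μ k - η * g k) 0)
    (hν : ∀ k ∈ Finset.Ico m n, 0 ≤ g k * (μ k - ν)) :
    2 * η * ((c - ν) * ∑ k ∈ Finset.Ico m n, -g k) ≤
      (μ m - c) ^ 2 + η ^ 2 * ∑ k ∈ Finset.Ico m n, g k ^ 2 := by
  have violation_le_regret :
      (c - ν) * ∑ k ∈ Finset.Ico m n, -g k ≤ ∑ k ∈ Finset.Ico m n, g k * (μ k - c) := by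
    rw [Finset.mul_sum]
    refine Finset.sum_le_sum fun k hk ↦ ?_
    linarith [hν k hk]
  exact (mul_le_mul_of_nonneg_left violation_le_regret (by positivity)).trans
    (regret_le_of_projected_descent hmn hc hupd)

end ProjectedDescent

theorem average_neg_le_of_projected_descent {μ g : ℕ → ℝ} {η c ν M : ℝ} {m K : ℕ}
    (hK : 0 < K) (hM : 0 < M) (hμ : 0 < μ m) (hη : η = μ m / (√K * M)) (hc : 0 ≤ c) (hνc : ν < c)
    (hupd : ∀ k ∈ Finset.Ico m (m + K), μ (k + 1) = max (μ k - η * g k) 0)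
    (hν : ∀ k ∈ Finset.Ico m (m + K), 0 ≤ g k * (μ k - ν))
    (hg : ∀ k ∈ Finset.Ico m (m + K), |g k| ≤ M) :
    1 / (K : ℝ) * ∑ k ∈ Finset.Ico m (m + K), -g k ≤
      M * (μ m / 2 + (c - μ m) ^ 2 / (2 * μ m)) / (√K * (c - ν)) := by
  have hgap : 0 < c - ν := sub_pos.2 hνc
  have hsq : √(K : ℝ) ^ 2 = K := Real.sq_sqrt K.cast_nonneg
  have sum_sq_le : ∑ k ∈ Finset.Ico m (m + K), g k ^ 2 ≤ K * M ^ 2 := by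
    have := Finset.sum_le_card_nsmul _ (fun k ↦ g k ^ 2) (M ^ 2)
      fun k hk ↦ sq_le_sq.2 ((hg k hk).trans (le_abs_self M))
    simpa only [Nat.card_Ico, add_tsub_cancel_left, nsmul_eq_mul] using this
  have step_sq : η ^ 2 * (K * M ^ 2) = μ m ^ 2 := by
    rw [hη]
    field_simp
    exact hsq.symm
  have scaled_sum_le : 2 * η * ((c - ν) * ∑ k ∈ Finset.Ico m (m + K), -g k) ≤
      (μ m - c) ^ 2 + μ m ^ 2 :=
    (sum_neg_le_of_projected_descent (Nat.le_add_right m K) (hη ▸ by positivity) hc hupd hν).trans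
      (by rw [← step_sq]; gcongr)
  calc 1 / (K : ℝ) * ∑ k ∈ Finset.Ico m (m + K), -g k
      = M / (2 * μ m * √K * (c - ν)) *
          (2 * η * ((c - ν) * ∑ k ∈ Finset.Ico m (m + K), -g k)) := by
        rw [hη]
        field_simp
        rw [hsq, mul_comm]
    _ ≤ M / (2 * μ m * √K * (c - ν)) * ((μ m - c) ^ 2 + μ m ^ 2) := by gcongr
    _ = M * (μ m / 2 + (c - μ m) ^ 2 / (2 * μ m)) / (√K * (c - ν)) := by
        field_simp
        ring

/-- The Lagrangian of maximizing `F` subject to `J ≤ ε`, with the multiplier `μ` before the point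
`θ` so that `lagrangian F J ε μ` is the function being maximized. -/
def lagrangian {Θ : Type*} (F J : Θ → ℝ) (ε μ : ℝ) (θ : Θ) : ℝ :=
  F θ + μ * (ε - J θ)

theorem slack_mul_sub_nonneg_of_lagrangian_le {Θ : Type*} {F J : Θ → ℝ} {ε μ ν : ℝ} {θ : Θ}
    (h : lagrangian F J ε ν θ ≤ lagrangian F J ε μ θ) : 0 ≤ (ε - J θ) * (μ - ν) := by
  unfold lagrangian at h
  linarith

theorem dual_descent_constraint_violation_general
    {Θ : Type*} (F J : Θ → ℝ) (ε Jbar : ℝ) (hε : 0 ≤ ε) (hmaxpos : 0 < max ε Jbar)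
    (K : ℕ) (hK : 1 ≤ K)
    (μ : ℕ → ℝ) (θ : ℕ → Θ) (hμ1 : 0 < μ 1)
    (η : ℝ) (hη : η = μ 1 / (√K * max ε Jbar))
    (hJθ : ∀ k, 1 ≤ k → k ≤ K → 0 ≤ J (θ k) ∧ J (θ k) ≤ Jbar)
    (hupd : ∀ k, 1 ≤ k → k ≤ K → μ (k + 1) = max (μ k - η * (ε - J (θ k))) 0)
    (μstar : ℝ) (hμstar : 0 ≤ μstar) (θ' : Θ)
    (hmaxstar : ∀ θ'' : Θ, lagrangian F J ε μstar θ'' ≤ lagrangian F J ε μstar θ')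
    (hQ : ∀ k, 1 ≤ k → k ≤ K → lagrangian F J ε μstar θ' ≤ lagrangian F J ε (μ k) (θ k))
    (μC : ℝ) (hμC : μstar < μC) :
    (1 / (K : ℝ)) * ∑ k ∈ Finset.Icc 1 K, (J (θ k) - ε) ≤
      max ε Jbar * (μ 1 / 2 + (μC - μ 1) ^ 2 / (2 * μ 1)) / (√K * (μC - μstar)) := by
  have hIcc : Finset.Icc 1 K = Finset.Ico 1 (1 + K) := by
    rw [add_comm, Finset.Ico_add_one_right_eq_Icc]
  have slack_mul_nonneg : ∀ k ∈ Finset.Icc 1 K, 0 ≤ (ε - J (θ k)) * (μ k - μstar) := by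
    intro k hk
    obtain ⟨h1k, hkK⟩ := Finset.mem_Icc.1 hk
    exact slack_mul_sub_nonneg_of_lagrangian_le ((hmaxstar (θ k)).trans (hQ k h1k hkK))
  have abs_slack_le : ∀ k ∈ Finset.Icc 1 K, |ε - J (θ k)| ≤ max ε Jbar := by
    intro k hk
    obtain ⟨h1k, hkK⟩ := Finset.mem_Icc.1 hk
    obtain ⟨hJ0, hJle⟩ := hJθ k h1k hkK
    exact abs_sub_le_of_nonneg_of_le hε (le_max_left _ _) hJ0 (hJle.trans (le_max_right _ _))
  have update : ∀ k ∈ Finset.Icc 1 K, μ (k + 1) = max (μ k - η * (ε - J (θ k))) 0 :=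
    fun k hk ↦ (Finset.mem_Icc.1 hk).elim (hupd k)
  rw [hIcc] at slack_mul_nonneg abs_slack_le update ⊢
  simpa only [neg_sub] using average_neg_le_of_projected_descent hK hmaxpos hμ1 hη
    (hμstar.trans hμC.le) hμC update slack_mul_nonneg abs_slack_le

theorem dual_descent_constraint_violation
    {Θ : Type*} [Nonempty Θ] (F J : Θ → ℝ) (ε Jbar : ℝ)
    (hε : 0 ≤ ε) (hJbar : 0 ≤ Jbar) (hmaxpos : 0 < max ε Jbar)
    (K : ℕ) (hK : 1 ≤ K)
    (μ : ℕ → ℝ) (θ : ℕ → Θ) (hμ1 : 0 < μ 1)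
    (η : ℝ) (hη : η = μ 1 / (Real.sqrt K * max ε Jbar))
    (hmax : ∀ k, 1 ≤ k → k ≤ K → ∀ θ'' : Θ,
      F θ'' + μ k * (ε - J θ'') ≤ F (θ k) + μ k * (ε - J (θ k)))
    (hJθ : ∀ k, 1 ≤ k → k ≤ K → 0 ≤ J (θ k) ∧ J (θ k) ≤ Jbar)
    (hupd : ∀ k, 1 ≤ k → k ≤ K → μ (k + 1) = max (μ k - η * (ε - J (θ k))) 0)
    (μstar : ℝ) (hμstar : 0 ≤ μstar) (θ' : Θ)
    (hmaxstar : ∀ θ'' : Θ,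
      F θ'' + μstar * (ε - J θ'') ≤ F θ' + μstar * (ε - J θ'))
    (hQ : ∀ k, 1 ≤ k → k ≤ K →
      F θ' + μstar * (ε - J θ') ≤ F (θ k) + μ k * (ε - J (θ k))) :
    ∀ μC : ℝ, μstar < μC →
      (1 / (K : ℝ)) * ∑ k ∈ Finset.Icc 1 K, (J (θ k) - ε) ≤
        max ε Jbar * (μ 1 + (μC - μ 1) ^ 2 / (2 * μ 1)) / (Real.sqrt K * (μC - μstar)) := by
  intro μC hμC
  have : 0 < μC - μstar := sub_pos.2 hμC
  refine (dual_descent_constraint_violation_general F J ε Jbar hε hmaxpos K hK μ θ hμ1 η hη hJθ hupd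
    μstar hμstar θ' hmaxstar hQ μC hμC).trans ?_
  gcongr
  exact half_le_self hμ1.le
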